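/- For n ≥ 3, the number of universal cycles for the set P_{n,2} of 2-permutations of [n] equals n^{n-2}·((n-2)!)^n. -/

import Mathlib

/-- `c` is a universal cycle for `k`-permutations of `[n]`, viewed as a cyclic
sequence of period `N`: every injective `k`-tuple appears exactly once as `k`
consecutive elements. -/
def IsUniversalCycle (n k N : ℕ) (c : ZMod N → Fin n) : Prop :=
  ∀ w : Fin k → Fin n, Function.Injective w →
    ∃! i : ZMod N, ∀ j : Fin k, c (i + (j : ℕ)) = w j

/-- Two cyclic sequences are the same universal cycle iff one is a rotation of
the other. -/
def RotEquiv {n k N : ℕ} (c c' : {c : ZMod N → Fin n // IsUniversalCycle n k N c}) : Prop :=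
  ∃ t : ZMod N, ∀ i, c'.1 i = c.1 (i + t)

/-!
A universal cycle for `2`-permutations is an Eulerian tour of the digraph on `[n]` with an arc from
each vertex to every other one, up to rotation; a rotation class is represented by its member
starting with a fixed arc `r → s`.

Eulerian tours of a balanced digraph are counted as in the BEST theorem. A tour is determined by the
order in which it leaves each vertex. The last exits of the vertices other than `r` form a spanning
tree directed to `r`. Conversely, if they do, then the walk that starts at `r` and always takes the
next prescribed exit can only get stuck at `r`, by balance, and then it has used every arc, because
exhaustion of a vertex propagates along the tree. Once the tree and the first exit of `r` are
prescribed, the remaining `deg v - 1` exits of each vertex `v` can be ordered freely.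

The spanning trees of the complete digraph are counted by Cayley's formula, by recursion over the
set of vertices whose parent is a root.
-/

section AcyclicMaps

open Finset

/-- The self-map `f` has no cycle inside `A`: every nonempty part of `A` is left by `f`
somewhere. -/
def IsAcyclicOn {V : Type*} (f : V → V) (A : Finset V) : Prop :=
  ∀ X ⊆ A, X.Nonempty → ∃ v ∈ X, f v ∉ X

variable {V : Type*} {f g : V → V} {A : Finset V}

theorem IsAcyclicOn.congr (hf : IsAcyclicOn f A) (h : ∀ v ∈ A, f v = g v) : IsAcyclicOn g A :=
  fun X hXA hX ↦
    let ⟨v, hv, hfv⟩ := hf X hXA hX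
    ⟨v, hv, h v (hXA hv) ▸ hfv⟩

theorem IsAcyclicOn.apply_ne (hf : IsAcyclicOn f A) {v : V} (hv : v ∈ A) : f v ≠ v := by
  obtain ⟨u, hu, hfu⟩ := hf {v} (singleton_subset_iff.2 hv) (singleton_nonempty v)
  obtain rfl := mem_singleton.1 hu
  simpa using hfu

variable [DecidableEq V]

instance : Decidable (IsAcyclicOn f A) :=
  inferInstanceAs (Decidable (∀ X ⊆ A, X.Nonempty → ∃ v ∈ X, f v ∉ X))

theorem isAcyclicOn_sdiff_iff {S : Finset V} (hS : ∀ v ∈ S, f v ∉ A) :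
    IsAcyclicOn f (A \ S) ↔ IsAcyclicOn f A := by
  refine ⟨fun hf X hXA hX ↦ ?_, fun hf X hXA hX ↦ hf X (hXA.trans sdiff_subset) hX⟩
  by_cases hXS : Disjoint X S
  · exact hf X (subset_sdiff.2 ⟨hXA, hXS⟩) hX
  · obtain ⟨v, hvX, hvS⟩ := not_disjoint_iff.1 hXS
    exact ⟨v, hvX, fun hfv ↦ hS v hvS (hXA hfv)⟩

end AcyclicMaps

section RootedForests

open Finset

variable {V : Type*} [Fintype V] [DecidableEq V]

theorem mem_piFinset_ite_singleton {D : V → Finset V} {A : Finset V} {f : V → V} :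
    f ∈ Fintype.piFinset (fun v ↦ if v ∈ A then D v else {v}) ↔
      (∀ v ∈ A, f v ∈ D v) ∧ ∀ v ∉ A, f v = v := by
  rw [Fintype.mem_piFinset, ← forall_and]
  refine forall_congr' fun v ↦ ?_
  by_cases hv : v ∈ A <;> simp [hv]

/-- The spanning forests of the digraph with out-neighbourhoods `D` whose roots are the vertices
outside `A`. A forest is encoded by the self-map sending each vertex of `A` to its parent and
fixing the roots. -/
def rootedForests (D : V → Finset V) (A : Finset V) : Finset (V → V) :=
  {f ∈ Fintype.piFinset fun v ↦ if v ∈ A then D v else {v} | IsAcyclicOn f A}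

variable {D : V → Finset V} {A U S : Finset V} {f : V → V}

theorem mem_rootedForests :
    f ∈ rootedForests D A ↔ (∀ v ∈ A, f v ∈ D v) ∧ (∀ v ∉ A, f v = v) ∧ IsAcyclicOn f A := by
  rw [rootedForests, mem_filter, mem_piFinset_ite_singleton, and_assoc]

theorem rootedForests_self_eq_empty (hA : A.Nonempty) : rootedForests (fun _ ↦ A) A = ∅ := by
  refine eq_empty_of_forall_notMem fun f hf ↦ ?_
  obtain ⟨hfA, -, hac⟩ := mem_rootedForests.1 hf
  obtain ⟨v, hv, hfv⟩ := hac A subset_rfl hA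
  exact hfv (hfA v hv)

theorem piecewise_mem_rootedForests {p h : V → V} (hAU : A ⊆ U) (hSA : S ⊆ A)
    (hp : ∀ v ∈ S, p v ∈ U \ A) (hh : h ∈ rootedForests (fun _ ↦ A) (A \ S)) :
    S.piecewise p h ∈ rootedForests (fun _ ↦ U) A := by
  rw [mem_rootedForests] at hh ⊢
  obtain ⟨hhA, hfix, hac⟩ := hh
  refine ⟨fun v hv ↦ ?_, fun v hv ↦ ?_, ?_⟩
  · by_cases hvS : v ∈ S
    · simpa [hvS] using (mem_sdiff.1 (hp v hvS)).1
    · simpa [hvS] using hAU (hhA v (mem_sdiff.2 ⟨hv, hvS⟩))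
  · rw [piecewise_eq_of_notMem _ _ _ fun hvS ↦ hv (hSA hvS)]
    exact hfix v fun hvA ↦ hv (mem_sdiff.1 hvA).1
  · rw [← isAcyclicOn_sdiff_iff (S := S) fun v hv ↦ by
      simpa [hv] using (mem_sdiff.1 (hp v hv)).2]
    exact hac.congr fun v hv ↦ by simp [(mem_sdiff.1 hv).2]

theorem piecewise_id_mem_rootedForests (hSA : S ⊆ A) (hf : f ∈ rootedForests (fun _ ↦ U) A)
    (hS : ∀ v ∈ A, v ∈ S ↔ f v ∉ A) :
    S.piecewise id f ∈ rootedForests (fun _ ↦ A) (A \ S) := by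
  rw [mem_rootedForests] at hf ⊢
  obtain ⟨-, hfix, hac⟩ := hf
  refine ⟨fun v hv ↦ ?_, fun v hv ↦ ?_, ?_⟩
  · obtain ⟨hvA, hvS⟩ := mem_sdiff.1 hv
    simpa [hvS] using (hS v hvA).not.1 hvS
  · by_cases hvS : v ∈ S
    · simp [hvS]
    · simpa [hvS] using hfix v fun hvA ↦ hv (mem_sdiff.2 ⟨hvA, hvS⟩)
  · exact ((isAcyclicOn_sdiff_iff fun v hv ↦ (hS v (hSA hv)).1 hv).2 hac).congr
      fun v hv ↦ by simp [(mem_sdiff.1 hv).2]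

/- The vertices of `A` whose parent is a root choose it freely; they are the roots of what is left
of the forest on `A`. -/
theorem card_rootedForests_fiber (hAU : A ⊆ U) (hSA : S ⊆ A) :
    #{f ∈ rootedForests (fun _ ↦ U) A | {v ∈ A | f v ∉ A} = S} =
      #(U \ A) ^ #S * #(rootedForests (fun _ ↦ A) (A \ S)) := by
  have card_choices :
      #(Fintype.piFinset fun v ↦ if v ∈ S then U \ A else {v}) = #(U \ A) ^ #S := by
    simp only [Fintype.card_piFinset, apply_ite Finset.card, card_singleton, prod_ite_mem,
      univ_inter, prod_const]
  rw [← card_choices, ← card_product]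
  refine card_bij' (fun f _ ↦ (S.piecewise f id, S.piecewise id f))
    (fun ph _ ↦ S.piecewise ph.1 ph.2) ?_ ?_ ?_ ?_
  · intro f hf
    obtain ⟨hf, hfS⟩ := mem_filter.1 hf
    have hS : ∀ v ∈ A, v ∈ S ↔ f v ∉ A := fun v hv ↦ by simp [← hfS, hv]
    refine mem_product.2 ⟨mem_piFinset_ite_singleton.2 ⟨fun v hv ↦ ?_, fun v hv ↦ ?_⟩,
      piecewise_id_mem_rootedForests hSA hf hS⟩
    · simpa [hv] using ⟨(mem_rootedForests.1 hf).1 v (hSA hv), (hS v (hSA hv)).1 hv⟩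
    · simp [hv]
  · rintro ⟨p, h⟩ hph
    obtain ⟨hp, hh⟩ := mem_product.1 hph
    have hpS := (mem_piFinset_ite_singleton.1 hp).1
    refine mem_filter.2 ⟨piecewise_mem_rootedForests hAU hSA hpS hh, ?_⟩
    ext v
    by_cases hv : v ∈ S
    · simpa [hv, hSA hv] using (mem_sdiff.1 (hpS v hv)).2
    · simpa [hv] using fun hvA ↦ (mem_rootedForests.1 hh).1 v (mem_sdiff.2 ⟨hvA, hv⟩)
  · intro f _
    ext v
    by_cases hv : v ∈ S <;> simp [hv]
  · rintro ⟨p, h⟩ hph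
    obtain ⟨hp, hh⟩ := mem_product.1 hph
    have hpfix : ∀ v ∉ S, p v = v := (mem_piFinset_ite_singleton.1 hp).2
    have hhfix : ∀ v ∈ S, h v = v := fun v hv ↦
      (mem_rootedForests.1 hh).2.1 v fun hvA ↦ (mem_sdiff.1 hvA).2 hv
    refine Prod.ext (funext fun v ↦ ?_) (funext fun v ↦ ?_) <;>
      by_cases hv : v ∈ S <;> simp [hv, hpfix, hhfix]

theorem card_rootedForests_eq_sum (hAU : A ⊆ U) :
    #(rootedForests (fun _ ↦ U) A) =
      ∑ S ∈ A.powerset, #(U \ A) ^ #S * #(rootedForests (fun _ ↦ A) (A \ S)) := by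
  have hmaps : Set.MapsTo (fun f : V → V ↦ {v ∈ A | f v ∉ A})
      (rootedForests (fun _ ↦ U) A : Set (V → V)) (A.powerset : Set (Finset V)) :=
    fun f _ ↦ mem_powerset.2 (filter_subset _ _)
  rw [card_eq_sum_card_fiberwise hmaps]
  exact sum_congr rfl fun S hS ↦ card_rootedForests_fiber hAU (mem_powerset.1 hS)

theorem sum_choose_mul_mul_pow_mul_pow {R : Type*} [CommSemiring R] (x y : R) (n : ℕ) :
    ∑ k ∈ range (n + 1), n.choose k * (k * x ^ k * y ^ (n - k)) = n * x * (x + y) ^ (n - 1) := by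
  cases n with
  | zero => simp
  | succ n =>
    rw [sum_range_succ', add_tsub_cancel_right, add_pow, mul_sum]
    simp only [Nat.cast_zero, zero_mul, mul_zero, add_zero, Nat.add_sub_add_right]
    refine sum_congr rfl fun k _ ↦ ?_
    calc ((n + 1).choose (k + 1) : R) * (((k + 1 : ℕ) : R) * x ^ (k + 1) * y ^ (n - k))
        = (((n + 1).choose (k + 1) * (k + 1) : ℕ) : R) * (x ^ (k + 1) * y ^ (n - k)) := by
          push_cast; ring
      _ = (((n + 1) * n.choose k : ℕ) : R) * (x ^ (k + 1) * y ^ (n - k)) := by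
          rw [Nat.add_one_mul_choose_eq]
      _ = ((n + 1 : ℕ) : R) * x * (x ^ k * y ^ (n - k) * (n.choose k : R)) := by
          push_cast; ring

/-- **Cayley's formula** for rooted forests. -/
theorem card_mul_card_rootedForests (hAU : A ⊆ U) :
    #U * #(rootedForests (fun _ ↦ U) A) = #(U \ A) * #U ^ #A := by
  induction A using Finset.strongInduction generalizing U with
  | _ A ih =>
  rcases A.eq_empty_or_nonempty with rfl | hA
  · have : rootedForests (fun _ ↦ U) ∅ = {id} := by
      ext f
      simp +contextual [mem_rootedForests, IsAcyclicOn, subset_empty, funext_iff]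
    simp [this]
  have hterm : ∀ S ∈ A.powerset, #A * (#(U \ A) ^ #S * #(rootedForests (fun _ ↦ A) (A \ S))) =
      #S * #(U \ A) ^ #S * #A ^ (#A - #S) := by
    intro S hS
    rw [mem_powerset] at hS
    rcases S.eq_empty_or_nonempty with rfl | hSne
    · simp [rootedForests_self_eq_empty hA]
    · rw [mul_left_comm, ih (A \ S) (sdiff_ssubset hS hSne) sdiff_subset,
        Finset.sdiff_sdiff_eq_self hS, card_sdiff_of_subset hS]
      ring
  have hsum : #A * #(rootedForests (fun _ ↦ U) A) = #A * (#(U \ A) * #U ^ (#A - 1)) :=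
    calc #A * #(rootedForests (fun _ ↦ U) A)
        = ∑ S ∈ A.powerset, #A * (#(U \ A) ^ #S * #(rootedForests (fun _ ↦ A) (A \ S))) := by
          rw [card_rootedForests_eq_sum hAU, mul_sum]
      _ = ∑ k ∈ range (#A + 1), (#A).choose k * (k * #(U \ A) ^ k * #A ^ (#A - k)) := by
          rw [sum_congr rfl hterm,
            sum_powerset_apply_card (fun k ↦ k * #(U \ A) ^ k * #A ^ (#A - k))]
          simp only [smul_eq_mul]
      _ = #A * (#(U \ A) * #U ^ (#A - 1)) := by
          have := sum_choose_mul_mul_pow_mul_pow #(U \ A) #A #A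
          rw [card_sdiff_add_card_eq_card hAU] at this
          simpa only [Nat.cast_id, mul_assoc] using this
  rw [Nat.eq_of_mul_eq_mul_left hA.card_pos hsum, mul_left_comm, ← pow_succ',
    Nat.sub_add_cancel hA.card_pos]

theorem rootedForests_compl_singleton :
    rootedForests (fun v ↦ {v}ᶜ) A = rootedForests (fun _ ↦ univ) A := by
  ext f
  simp only [mem_rootedForests, mem_compl, mem_singleton, mem_univ, implies_true, true_and,
    and_iff_right_iff_imp]
  exact fun ⟨_, hac⟩ v hv ↦ hac.apply_ne hv

theorem card_rootedForests_compl_singleton (r : V) :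
    #(rootedForests (fun v ↦ {v}ᶜ) {r}ᶜ) = Fintype.card V ^ (Fintype.card V - 2) := by
  have hcayley := card_mul_card_rootedForests (subset_univ ({r}ᶜ : Finset V))
  have hV : 0 < Fintype.card V := Fintype.card_pos_iff.2 ⟨r⟩
  rw [← rootedForests_compl_singleton, ← compl_eq_univ_sdiff, compl_compl, card_singleton,
    card_compl, card_singleton, card_univ, one_mul] at hcayley
  refine Nat.eq_of_mul_eq_mul_left hV (hcayley.trans ?_)
  obtain hV1 | hV2 : Fintype.card V = 1 ∨ 2 ≤ Fintype.card V := by omega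
  · simp [hV1]
  · rw [← pow_succ', show Fintype.card V - 2 + 1 = Fintype.card V - 1 by omega]

end RootedForests

section Orderings

open Finset

open scoped Nat

variable {V : Type*}

/-- The listings of the elements of `S` without repetition. -/
def orderings (S : Finset V) : Finset (List V) :=
  ⟨S.val.lists, Multiset.lists_nodup_finset S⟩

variable {S : Finset V} {l m : List V} {a b : V}

theorem mem_orderings_iff_coe_eq : l ∈ orderings S ↔ (l : Multiset V) = S.val := by
  rw [orderings, mem_mk, Multiset.mem_lists_iff, eq_comm]
  rfl

theorem mem_orderings : l ∈ orderings S ↔ l.Nodup ∧ ∀ a, a ∈ l ↔ a ∈ S := by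
  rw [mem_orderings_iff_coe_eq]
  refine ⟨fun h ↦ ⟨?_, fun a ↦ ?_⟩, fun ⟨hnodup, hmem⟩ ↦ ?_⟩
  · rw [← Multiset.coe_nodup, h]
    exact S.nodup
  · rw [← Multiset.mem_coe, h, mem_val]
  · exact (Multiset.Nodup.ext (Multiset.coe_nodup.2 hnodup) S.nodup).2 hmem

theorem length_of_mem_orderings (hl : l ∈ orderings S) : l.length = #S := by
  rw [← Multiset.coe_card, mem_orderings_iff_coe_eq.1 hl, card_val]

theorem card_orderings (S : Finset V) : #(orderings S) = (#S)! := by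
  rw [orderings, card_mk, ← coe_toList S, Multiset.lists_coe, Multiset.coe_card,
    List.length_permutations, length_toList]

theorem concat_mem_orderings [DecidableEq V] (ha : a ∈ S) :
    l ++ [a] ∈ orderings S ↔ l ∈ orderings (S.erase a) := by
  rw [mem_orderings_iff_coe_eq, mem_orderings_iff_coe_eq, erase_val, ← Multiset.coe_add,
    add_comm, Multiset.coe_singleton, Multiset.singleton_add, ← Multiset.cons_erase ha,
    Multiset.cons_inj_right, Multiset.erase_cons_head]

theorem cons_mem_orderings [DecidableEq V] (ha : a ∈ S) :
    a :: l ∈ orderings S ↔ l ∈ orderings (S.erase a) := by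
  rw [← concat_mem_orderings ha, mem_orderings_iff_coe_eq, mem_orderings_iff_coe_eq,
    Multiset.coe_eq_coe.2 (List.perm_append_singleton a l)]

theorem card_orderings_getLastD_eq [DecidableEq V] (ha : a ∈ S) :
    #{l ∈ orderings S | l.getLastD b = a} = (#S - 1)! := by
  rw [← card_erase_of_mem ha, ← card_orderings]
  symm
  refine card_nbij (· ++ [a]) (fun l hl ↦ ?_) (List.append_left_injective [a]).injOn ?_
  · exact mem_filter.2 ⟨(concat_mem_orderings ha).2 hl, List.getLastD_concat⟩
  · intro l hl
    obtain ⟨hlS, hlast⟩ := mem_filter.1 hl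
    obtain rfl | ⟨l', c, rfl⟩ := l.eq_nil_or_concat'
    · exact absurd (((mem_orderings.1 hlS).2 a).2 ha) List.not_mem_nil
    · rw [List.getLastD_concat] at hlast
      subst hlast
      exact ⟨l', (concat_mem_orderings ha).1 hlS, rfl⟩

theorem card_orderings_head?_eq [DecidableEq V] (ha : a ∈ S) :
    #{l ∈ orderings S | l.head? = some a} = (#S - 1)! := by
  rw [← card_erase_of_mem ha, ← card_orderings]
  symm
  refine card_nbij (a :: ·) (fun l hl ↦ ?_) List.cons_injective.injOn ?_
  · exact mem_filter.2 ⟨(cons_mem_orderings ha).2 hl, List.head?_cons⟩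
  · intro l hl
    obtain ⟨hlS, hhead⟩ := mem_filter.1 hl
    obtain ⟨l', rfl⟩ := List.head?_eq_some_iff.1 hhead
    exact ⟨l', (cons_mem_orderings ha).1 hlS, rfl⟩

theorem concat_prefix_inj (ha : l ++ [a] <+: m) (hb : l ++ [b] <+: m) : a = b := by
  have h : l ++ [a] = l ++ [b] := (List.prefix_of_prefix_length_le ha hb (by simp)).eq_of_length
    (by simp)
  simpa using h

theorem exists_concat_prefix_of_ne (h : l <+: m) (hne : l ≠ m) : ∃ a, l ++ [a] <+: m := by
  obtain ⟨_ | ⟨a, k⟩, rfl⟩ := h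
  · exact absurd (List.append_nil l).symm hne
  · exact ⟨a, k, by simp⟩

theorem eq_of_prefix_of_getLastD_mem (h : l <+: m) (hm : m.Nodup) (hlast : m.getLastD a ∈ l) :
    l = m := by
  obtain ⟨k, rfl⟩ := h
  obtain rfl | ⟨k', c, rfl⟩ := k.eq_nil_or_concat'
  · rw [List.append_nil]
  · rw [← List.append_assoc, List.getLastD_concat] at hlast
    exact absurd rfl ((List.nodup_append.1 hm).2.2 c hlast c (by simp))

end Orderings

section Exits

open Finset

variable {V : Type*} [DecidableEq V]

/-- The successive vertices through which the walk `x` leaves `v` during its first `T` steps. -/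
def exits (x : ℕ → V) (T : ℕ) (v : V) : List V :=
  ((List.range T).filter (x · = v)).map fun t ↦ x (t + 1)

variable {x y : ℕ → V} {S T : ℕ} {v w : V}

theorem exits_zero : exits x 0 v = [] := rfl

theorem exits_succ_self : exits x (T + 1) (x T) = exits x T (x T) ++ [x (T + 1)] := by
  simp [exits, List.range_succ]

theorem exits_succ_of_ne (h : x T ≠ v) : exits x (T + 1) v = exits x T v := by
  simp [exits, List.range_succ, h]

theorem exits_prefix_succ : exits x T v <+: exits x (T + 1) v := by
  by_cases h : x T = v
  · rw [← h, exits_succ_self]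
    exact List.prefix_append _ _
  · rw [exits_succ_of_ne h]

theorem exits_prefix_of_le (hST : S ≤ T) : exits x S v <+: exits x T v := by
  induction T, hST using Nat.le_induction with
  | base => exact List.prefix_rfl
  | succ T _ ih => exact ih.trans exits_prefix_succ

theorem head?_exits (x : ℕ → V) (hT : 0 < T) : (exits x T (x 0)).head? = some (x 1) := by
  obtain ⟨l, hl⟩ := exits_prefix_of_le (x := x) (v := x 0) (Nat.succ_le_of_lt hT)
  rw [← hl, exits_succ_self, exits_zero]
  rfl

theorem exits_eq_of_forall_ne (hST : S ≤ T) (h : ∀ t, S ≤ t → t < T → x t ≠ v) :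
    exits x T v = exits x S v := by
  induction T, hST using Nat.le_induction with
  | base => rfl
  | succ T hST ih =>
    rw [exits_succ_of_ne (h T hST T.lt_succ_self),
      ih fun t hSt htT ↦ h t hSt (htT.trans T.lt_succ_self)]

theorem mem_exits : w ∈ exits x T v ↔ ∃ t < T, x t = v ∧ x (t + 1) = w := by
  simp [exits, and_assoc]

theorem length_exits : (exits x T v).length = Nat.count (x · = v) T := by
  induction T with
  | zero => simp [exits_zero]
  | succ T ih =>
    rw [Nat.count_succ]
    split_ifs with h
    · rw [← ih, ← h, exits_succ_self, List.length_append, List.length_singleton]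
    · rw [← ih, exits_succ_of_ne h, add_zero]

theorem sum_length_exits [Fintype V] (x : ℕ → V) (T : ℕ) : ∑ v, (exits x T v).length = T := by
  simp only [length_exits]
  induction T with
  | zero => simp
  | succ T ih => simp [Nat.count_succ, sum_add_distrib, ih]

theorem exits_congr (h : ∀ t ≤ T, x t = y t) (v : V) : exits x T v = exits y T v := by
  induction T with
  | zero => rfl
  | succ T ih =>
    have hT := h T T.le_succ
    replace ih := ih fun t ht ↦ h t (ht.trans T.le_succ)
    by_cases hv : x T = v
    · subst hv
      rw [exits_succ_self, ih, h (T + 1) le_rfl, hT, exits_succ_self]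
    · rw [exits_succ_of_ne hv, ih, exits_succ_of_ne (hT ▸ hv)]

theorem injOn_arcs_of_nodup_exits (h : ∀ v, (exits x T v).Nodup) :
    Set.InjOn (fun t ↦ (x t, x (t + 1))) (Set.Iio T) := by
  intro t ht t' ht' heq
  obtain ⟨hfst, hsnd⟩ := Prod.mk.inj heq
  exact List.inj_on_of_nodup_map (h (x t)) (by simpa using ht) (by simpa [hfst] using ht') hsnd

theorem eq_of_exits_prefix_of_le {σ : V → List V} (h0 : x 0 = y 0) (hx : ∀ v, exits x T v <+: σ v)
    (hy : ∀ v, exits y T v <+: σ v) {t : ℕ} (ht : t ≤ T) : x t = y t := by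
  induction t using Nat.strong_induction_on with
  | _ t ih =>
  cases t with
  | zero => exact h0
  | succ t =>
    have hyt := (exits_prefix_of_le ht).trans (hy (y t))
    have hxt := (exits_prefix_of_le ht).trans (hx (x t))
    rw [exits_succ_self] at hxt hyt
    rw [← ih t t.lt_succ_self (by omega),
      ← exits_congr fun s hs ↦ ih s (by omega) (by omega)] at hyt
    exact concat_prefix_inj hxt hyt

theorem exists_walk_exits_prefix_stuck [Finite V] (σ : V → List V) (r : V) :
    ∃ (x : ℕ → V) (T : ℕ), x 0 = r ∧ (∀ v, exits x T v <+: σ v) ∧ exits x T (x T) = σ (x T) := by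
  have := Fintype.ofFinite V
  by_contra! hstuck
  have hwalk (T : ℕ) : ∃ x : ℕ → V, x 0 = r ∧ ∀ v, exits x T v <+: σ v := by
    induction T with
    | zero => exact ⟨fun _ ↦ r, rfl, fun v ↦ ⟨σ v, rfl⟩⟩
    | succ T ih =>
      obtain ⟨x, h0, hx⟩ := ih
      obtain ⟨w, hw⟩ := exists_concat_prefix_of_ne (hx (x T)) (hstuck x T h0 hx)
      let y := Function.update x (T + 1) w
      have hyx : ∀ t ≤ T, y t = x t := fun t ht ↦ Function.update_of_ne (by omega) _ _
      refine ⟨y, (hyx 0 T.zero_le).trans h0, fun v ↦ ?_⟩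
      by_cases hv : y T = v
      · rw [← hv, exits_succ_self, exits_congr hyx, hyx T le_rfl]
        simpa [y] using hw
      · rw [exits_succ_of_ne hv, exits_congr hyx]
        exact hx v
  obtain ⟨x, -, hx⟩ := hwalk (∑ v, (σ v).length + 1)
  have hle := sum_le_sum fun v (_ : v ∈ univ) ↦ (hx v).length_le
  rw [sum_length_exits] at hle
  omega

end Exits

section FlowConservation

open Finset

variable {V : Type*} [Fintype V] [DecidableEq V] {x : ℕ → V} {T : ℕ}

theorem card_filter_mem_exits (h : ∀ u, (exits x T u).Nodup) (v : V) :
    #{u | v ∈ exits x T u} = Nat.count (fun t ↦ x (t + 1) = v) T := by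
  rw [Nat.count_eq_card_filter_range]
  symm
  refine card_nbij x (fun t ht ↦ ?_) (fun t ht t' ht' heq ↦ ?_) (fun u hu ↦ ?_)
  · obtain ⟨htT, htv⟩ := mem_filter.1 ht
    exact mem_filter.2 ⟨mem_univ _, mem_exits.2 ⟨t, mem_range.1 htT, rfl, htv⟩⟩
  · obtain ⟨htT, htv⟩ := mem_filter.1 ht
    obtain ⟨htT', htv'⟩ := mem_filter.1 ht'
    exact injOn_arcs_of_nodup_exits h (mem_range.1 htT) (mem_range.1 htT')
      (Prod.ext heq (htv.trans htv'.symm))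
  · obtain ⟨t, htT, htu, htv⟩ := mem_exits.1 (mem_filter.1 hu).2
    exact ⟨t, mem_filter.2 ⟨mem_range.2 htT, htv⟩, htu⟩

theorem length_exits_add_ite (h : ∀ u, (exits x T u).Nodup) (v : V) :
    (exits x T v).length + (if x T = v then 1 else 0) =
      #{u | v ∈ exits x T u} + if x 0 = v then 1 else 0 := by
  rw [card_filter_mem_exits h, length_exits, ← Nat.count_succ, Nat.count_succ']

theorem length_exits_eq_card_of_closed (h : ∀ u, (exits x T u).Nodup) (hx : x T = x 0) (v : V) :
    (exits x T v).length = #{u | v ∈ exits x T u} := by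
  have hflow := length_exits_add_ite h v
  rw [hx] at hflow
  exact Nat.add_right_cancel hflow

end FlowConservation

section EulerianTours

open Finset

variable {V : Type*}

/-- The closed walk `x` of length `N` runs through every arc of the digraph with
out-neighbourhoods `D` exactly once. -/
def IsEulerianTour (D : V → Finset V) (N : ℕ) (x : ℕ → V) : Prop :=
  x N = x 0 ∧ Set.BijOn (fun t ↦ (x t, x (t + 1))) (Set.Iio N) {a | a.2 ∈ D a.1}

variable [DecidableEq V] {D : V → Finset V} {x : ℕ → V} {N T : ℕ} {σ : V → List V} {r s : V}

theorem isEulerianTour_iff_exits_mem_orderings :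
    IsEulerianTour D N x ↔ x N = x 0 ∧ ∀ v, exits x N v ∈ orderings (D v) := by
  refine and_congr_right fun _ ↦ ⟨fun ⟨hmaps, hinj, hsurj⟩ v ↦ ?_, fun h ↦ ⟨?_, ?_, ?_⟩⟩
  · refine mem_orderings.2 ⟨List.Nodup.map_on (fun t ht t' ht' heq ↦ ?_)
      (List.nodup_range.filter _), fun w ↦ mem_exits.trans ⟨?_, fun hw ↦ ?_⟩⟩
    · simp only [List.mem_filter, List.mem_range, decide_eq_true_eq] at ht ht'
      exact hinj ht.1 ht'.1 (Prod.ext (ht.2.trans ht'.2.symm) heq)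
    · rintro ⟨t, ht, rfl, rfl⟩
      exact hmaps ht
    · obtain ⟨t, ht, heq⟩ := hsurj (show (v, w) ∈ {a : V × V | a.2 ∈ D a.1} from hw)
      exact ⟨t, ht, (Prod.mk.inj heq).1, (Prod.mk.inj heq).2⟩
  · exact fun t ht ↦ ((mem_orderings.1 (h (x t))).2 _).1 (mem_exits.2 ⟨t, ht, rfl, rfl⟩)
  · exact injOn_arcs_of_nodup_exits fun v ↦ (mem_orderings.1 (h v)).1
  · rintro ⟨v, w⟩ hw
    obtain ⟨t, ht, rfl, rfl⟩ := mem_exits.1 (((mem_orderings.1 (h v)).2 w).2 hw)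
    exact ⟨t, ht, rfl⟩

theorem nodup_exits_of_prefix_orderings (hσ : ∀ v, σ v ∈ orderings (D v))
    (hx : ∀ v, exits x T v <+: σ v) (v : V) : (exits x T v).Nodup :=
  (mem_orderings.1 (hσ v)).1.sublist (hx v).sublist

variable [Fintype V]

/-- Every vertex has as many in-neighbours as out-neighbours in the digraph with
out-neighbourhoods `D`. -/
def IsBalanced (D : V → Finset V) : Prop :=
  ∀ v, #{u | v ∈ D u} = #(D v)

/-- The ways of listing all out-neighbours of each vertex, in the order in which an Eulerian tour
from `r` may visit them: the last out-neighbours have to form a spanning tree directed to `r`. -/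
def exitSystems (D : V → Finset V) (r : V) : Finset (V → List V) :=
  {σ ∈ Fintype.piFinset fun v ↦ orderings (D v) | IsAcyclicOn (fun v ↦ (σ v).getLastD v) {r}ᶜ}

theorem mem_exitSystems : σ ∈ exitSystems D r ↔
    (∀ v, σ v ∈ orderings (D v)) ∧ IsAcyclicOn (fun v ↦ (σ v).getLastD v) {r}ᶜ := by
  rw [exitSystems, mem_filter, Fintype.mem_piFinset]

theorem eq_sum_card_of_exits_mem_orderings (h : ∀ v, exits x T v ∈ orderings (D v)) :
    T = ∑ v, #(D v) := by
  rw [← sum_length_exits x T]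
  exact sum_congr rfl fun v _ ↦ length_of_mem_orderings (h v)

/- The tour leaves a set `X` not containing its starting point for the last time through the last
exit of some vertex of `X`. -/
theorem IsEulerianTour.exits_mem_exitSystems (hx : IsEulerianTour D N x)
    (hD : ∀ v, (D v).Nonempty) : exits x N ∈ exitSystems D (x 0) := by
  obtain ⟨hclosed, hexits⟩ := isEulerianTour_iff_exits_mem_orderings.1 hx
  refine mem_exitSystems.2 ⟨hexits, fun X hX hXne ↦ ?_⟩
  have h0 : x 0 ∉ X := fun h0 ↦ by simpa using hX h0
  have hvisit : {t ∈ range N | x t ∈ X}.Nonempty := by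
    obtain ⟨v, hv⟩ := hXne
    obtain ⟨w, hw⟩ := hD v
    obtain ⟨t, ht, rfl, -⟩ := mem_exits.1 (((mem_orderings.1 (hexits v)).2 w).2 hw)
    exact ⟨t, mem_filter.2 ⟨mem_range.2 ht, hv⟩⟩
  obtain ⟨t, ht, hmax⟩ := exists_max_image _ id hvisit
  simp only [mem_filter, mem_range, id, and_imp] at ht hmax
  have hleave : ∀ u, t + 1 ≤ u → u < N → x u ∉ X := fun u htu hu huX ↦
    absurd (hmax u hu huX) (by omega)
  refine ⟨x t, ht.2, ?_⟩
  have hexits_last : exits x N (x t) = exits x (t + 1) (x t) :=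
    exits_eq_of_forall_ne (Nat.succ_le_of_lt ht.1) fun u htu hu (heq : x u = x t) ↦
      hleave u htu hu (heq ▸ ht.2)
  change (exits x N (x t)).getLastD (x t) ∉ X
  rw [hexits_last, exits_succ_self, List.getLastD_concat]
  obtain hlt | heq := lt_or_eq_of_le (Nat.succ_le_of_lt ht.1)
  · exact hleave _ le_rfl hlt
  · rwa [show t + 1 = N from heq, hclosed]

theorem filter_mem_exits_subset (hσ : ∀ v, σ v ∈ orderings (D v))
    (hx : ∀ v, exits x T v <+: σ v) (v : V) :
    ({u | v ∈ exits x T u} : Finset V) ⊆ ({u | v ∈ D u} : Finset V) :=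
  monotone_filter_right _ fun u _ hu ↦ ((mem_orderings.1 (hσ u)).2 v).1 ((hx u).subset hu)

theorem IsBalanced.closed_of_stuck (hD : IsBalanced D) (hσ : ∀ v, σ v ∈ orderings (D v))
    (hx : ∀ v, exits x T v <+: σ v) (hT : exits x T (x T) = σ (x T)) : x T = x 0 := by
  have hflow := length_exits_add_ite (nodup_exits_of_prefix_orderings hσ hx) (x T)
  have hle := card_le_card (filter_mem_exits_subset hσ hx (x T))
  rw [hD, ← length_of_mem_orderings (hσ (x T)), ← hT] at hle
  by_contra hne
  rw [if_pos rfl, if_neg (Ne.symm hne)] at hflow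
  omega

/- If `w` is exhausted, all arcs into `w` are used. Hence a vertex whose last exit is exhausted is
itself exhausted, and exhaustion spreads from the root through the tree of last exits. -/
theorem IsBalanced.exits_eq_of_closed (hD : IsBalanced D) (hσ : σ ∈ exitSystems D (x 0))
    (hx : ∀ v, exits x T v <+: σ v) (hclosed : x T = x 0) (hroot : exits x T (x 0) = σ (x 0)) :
    exits x T = σ := by
  obtain ⟨hord, hac⟩ := mem_exitSystems.1 hσ
  have hused : ∀ w, exits x T w = σ w → ∀ u, w ∈ D u → w ∈ exits x T u := by
    intro w hw u hu
    have heq := eq_of_subset_of_card_le (filter_mem_exits_subset hord hx w) <| by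
      rw [hD, ← length_of_mem_orderings (hord w), ← hw,
        length_exits_eq_card_of_closed (nodup_exits_of_prefix_orderings hord hx) hclosed]
    have hmem : u ∈ ({u | w ∈ D u} : Finset V) := mem_filter.2 ⟨mem_univ u, hu⟩
    rw [← heq] at hmem
    exact (mem_filter.1 hmem).2
  by_contra hne
  obtain ⟨v, hv, hlast⟩ := hac {v | exits x T v ≠ σ v}
    (fun v hv ↦ mem_compl.2 fun hv0 ↦ (mem_filter.1 hv).2 (mem_singleton.1 hv0 ▸ hroot))
    (by simpa [Finset.Nonempty, funext_iff] using hne)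
  simp only [mem_filter, mem_univ, true_and, not_not] at hv hlast
  have hσv : σ v ≠ [] := fun h ↦ by
    have hpre := hx v
    rw [h, List.prefix_nil] at hpre
    exact hv (hpre.trans h.symm)
  have hlast_mem : (σ v).getLastD v ∈ σ v := by
    rw [List.getLastD_eq_getLast?, List.getLast?_eq_some_getLast hσv]
    exact List.getLast_mem hσv
  refine hv (eq_of_prefix_of_getLastD_mem (a := v) (hx v) (mem_orderings.1 (hord v)).1 ?_)
  exact hused _ hlast v (((mem_orderings.1 (hord v)).2 _).1 hlast_mem)

theorem IsBalanced.exists_isEulerianTour (hD : IsBalanced D) (hσ : σ ∈ exitSystems D r) :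
    ∃ x, x 0 = r ∧ IsEulerianTour D (∑ v, #(D v)) x ∧ exits x (∑ v, #(D v)) = σ := by
  obtain ⟨x, T, rfl, hx, hT⟩ := exists_walk_exits_prefix_stuck σ r
  have hord := (mem_exitSystems.1 hσ).1
  have hclosed := hD.closed_of_stuck hord hx hT
  have hexits := hD.exits_eq_of_closed hσ hx hclosed (hclosed ▸ hT)
  rw [← hexits] at hord
  rw [← eq_sum_card_of_exits_mem_orderings hord]
  exact ⟨x, rfl, isEulerianTour_iff_exits_mem_orderings.2 ⟨hclosed, hord⟩, hexits⟩

end EulerianTours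

section CountingEulerianTours

open Finset

open scoped Nat

variable {V : Type*} [DecidableEq V] {D : V → Finset V} {σ : V → List V} {r s : V}

/-- The spanning tree directed to `r` formed by the last exits of the system `σ`, encoded as an
element of `rootedForests` with the single root `r`. -/
def lastExitTree (σ : V → List V) (r : V) : V → V :=
  Function.update (fun v ↦ (σ v).getLastD v) r r

theorem lastExitTree_self : lastExitTree σ r r = r :=
  Function.update_self ..

theorem lastExitTree_of_ne {v : V} (hv : v ≠ r) : lastExitTree σ r v = (σ v).getLastD v :=
  Function.update_of_ne hv ..

variable [Fintype V]

theorem lastExitTree_mem_rootedForests (hσ : σ ∈ exitSystems D r) :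
    lastExitTree σ r ∈ rootedForests D {r}ᶜ := by
  obtain ⟨hord, hac⟩ := mem_exitSystems.1 hσ
  simp only [mem_rootedForests, mem_compl, mem_singleton, not_not, forall_eq]
  refine ⟨fun v hv ↦ ?_, lastExitTree_self, hac.congr fun v hv ↦ ?_⟩
  · have hne : (σ v).getLastD v ≠ v := hac.apply_ne (by simpa using hv)
    rw [lastExitTree_of_ne hv, ← (mem_orderings.1 (hord v)).2]
    exact (List.mem_cons.1 (List.getLastD_mem_cons ..)).resolve_left hne
  · rw [lastExitTree_of_ne (by simpa using hv)]

theorem filter_exitSystems_lastExitTree_eq {f : V → V} (hf : f ∈ rootedForests D {r}ᶜ) :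
    {σ ∈ exitSystems D r | (σ r).head? = some s ∧ lastExitTree σ r = f} =
      Fintype.piFinset fun v ↦ if v = r then {l ∈ orderings (D v) | l.head? = some s}
        else {l ∈ orderings (D v) | l.getLastD v = f v} := by
  obtain ⟨-, hfix, hac⟩ := mem_rootedForests.1 hf
  ext σ
  simp only [mem_filter, mem_exitSystems, Fintype.mem_piFinset]
  constructor
  · rintro ⟨⟨hord, -⟩, hhead, rfl⟩ v
    split_ifs with hv
    · exact mem_filter.2 ⟨hord v, hv ▸ hhead⟩
    · exact mem_filter.2 ⟨hord v, (lastExitTree_of_ne hv).symm⟩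
  · intro h
    have hroot : σ r ∈ orderings (D r) ∧ (σ r).head? = some s := by simpa using h r
    have hlast (v : V) (hv : v ≠ r) : σ v ∈ orderings (D v) ∧ (σ v).getLastD v = f v := by
      simpa [hv] using h v
    refine ⟨⟨fun v ↦ ?_, hac.congr fun v hv ↦ ?_⟩, hroot.2, funext fun v ↦ ?_⟩
    · by_cases hv : v = r
      exacts [hv ▸ hroot.1, (hlast v hv).1]
    · exact (hlast v (by simpa using hv)).2.symm
    · by_cases hv : v = r
      · rw [hv, lastExitTree_self, hfix r (by simp)]
      · rw [lastExitTree_of_ne hv, (hlast v hv).2]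

theorem card_exitSystems_head?_eq (hs : s ∈ D r) :
    #{σ ∈ exitSystems D r | (σ r).head? = some s} =
      #(rootedForests D {r}ᶜ) * ∏ v, (#(D v) - 1)! := by
  have hmaps : Set.MapsTo (fun σ : V → List V ↦ lastExitTree σ r)
      ({σ ∈ exitSystems D r | (σ r).head? = some s} : Finset (V → List V))
      (rootedForests D {r}ᶜ : Set (V → V)) :=
    fun σ hσ ↦ lastExitTree_mem_rootedForests (mem_filter.1 hσ).1
  rw [card_eq_sum_card_fiberwise hmaps, ← smul_eq_mul]
  refine sum_eq_card_nsmul fun f hf ↦ ?_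
  rw [filter_filter, filter_exitSystems_lastExitTree_eq hf, Fintype.card_piFinset]
  refine prod_congr rfl fun v _ ↦ ?_
  split_ifs with hv
  · exact card_orderings_head?_eq (hv ▸ hs)
  · exact card_orderings_getLastD_eq ((mem_rootedForests.1 hf).1 v (by simpa using hv))

theorem IsBalanced.exists_periodic_isEulerianTour {N : ℕ} [NeZero N] (hD : IsBalanced D)
    (hN : N = ∑ v, #(D v)) (hσ : σ ∈ exitSystems D r) :
    ∃ c : ZMod N → V, c 0 = r ∧ IsEulerianTour D N (fun t ↦ c t) ∧
      exits (fun t ↦ c t) N = σ := by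
  obtain ⟨x, hx0, htour, hexits⟩ := hD.exists_isEulerianTour hσ
  rw [← hN] at htour hexits
  let c : ZMod N → V := fun i ↦ x i.val
  have hc : ∀ t ≤ N, c t = x t := fun t ht ↦ by
    obtain hlt | rfl := ht.lt_or_eq
    · exact congrArg x (ZMod.val_natCast_of_lt hlt)
    · simp [c, htour.1]
  have hcσ : exits (fun t ↦ c t) N = σ := hexits ▸ funext (exits_congr hc)
  refine ⟨c, by simpa [c] using hx0, ?_, hcσ⟩
  refine isEulerianTour_iff_exits_mem_orderings.2 ⟨by simp, fun v ↦ ?_⟩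
  rw [hcσ]
  exact (mem_exitSystems.1 hσ).1 v

theorem IsBalanced.card_isEulerianTour_eq_card_exitSystems {N : ℕ} (hD : IsBalanced D)
    (hne : ∀ v, (D v).Nonempty) (hN : N = ∑ v, #(D v)) :
    Nat.card {c : ZMod N → V // IsEulerianTour D N (fun t ↦ c t) ∧ c 0 = r ∧ c 1 = s} =
      #{σ ∈ exitSystems D r | (σ r).head? = some s} := by
  have hpos : 0 < N := hN ▸ sum_pos (fun v _ ↦ (hne v).card_pos) ⟨r, mem_univ r⟩
  have := NeZero.of_pos hpos
  have head_exits (c : ZMod N → V) : (exits (fun t ↦ c t) N (c 0)).head? = some (c 1) := by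
    simpa using head?_exits (fun t ↦ c t) hpos
  rw [← Nat.card_eq_finsetCard]
  refine Nat.card_eq_of_bijective (fun c ↦ ⟨exits (fun t ↦ c.1 t) N, ?_⟩) ⟨?_, ?_⟩
  · obtain ⟨c, hc, rfl, rfl⟩ := c
    exact mem_filter.2 ⟨by simpa using hc.exits_mem_exitSystems hne, head_exits c⟩
  · rintro ⟨c, _, hc0, _⟩ ⟨c', _, hc0', _⟩ heq
    have hexits : exits (fun t ↦ c t) N = exits (fun t ↦ c' t) N := congrArg Subtype.val heq
    refine Subtype.ext (funext fun i ↦ ?_)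
    simpa using eq_of_exits_prefix_of_le (x := fun t ↦ c t) (y := fun t ↦ c' t)
      (by simp [hc0, hc0']) (fun v ↦ hexits ▸ List.prefix_rfl) (fun v ↦ List.prefix_rfl)
      (ZMod.val_lt i).le
  · rintro ⟨σ, hσ⟩
    obtain ⟨hσ, hhead⟩ := mem_filter.1 hσ
    obtain ⟨c, rfl, hc, rfl⟩ := hD.exists_periodic_isEulerianTour hN hσ
    rw [head_exits, Option.some_inj] at hhead
    exact ⟨⟨c, hc, rfl, hhead⟩, rfl⟩

/-- The **BEST theorem**, for the Eulerian tours that start with the arc from `r` to `s`. -/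
theorem IsBalanced.card_isEulerianTour {N : ℕ} (hD : IsBalanced D) (hne : ∀ v, (D v).Nonempty)
    (hN : N = ∑ v, #(D v)) (hs : s ∈ D r) :
    Nat.card {c : ZMod N → V // IsEulerianTour D N (fun t ↦ c t) ∧ c 0 = r ∧ c 1 = s} =
      #(rootedForests D {r}ᶜ) * ∏ v, (#(D v) - 1)! := by
  rw [hD.card_isEulerianTour_eq_card_exitSystems hne hN, card_exitSystems_head?_eq hs]

theorem isBalanced_compl_singleton : IsBalanced fun v : V ↦ ({v}ᶜ : Finset V) := by
  intro v
  congr 1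
  ext u
  simp [eq_comm]

theorem card_isEulerianTour_compl_singleton {N : ℕ}
    (hN : N = Fintype.card V * (Fintype.card V - 1)) (hrs : r ≠ s) :
    Nat.card {c : ZMod N → V //
        IsEulerianTour (fun v ↦ {v}ᶜ) N (fun t ↦ c t) ∧ c 0 = r ∧ c 1 = s} =
      Fintype.card V ^ (Fintype.card V - 2) * (Fintype.card V - 2)! ^ Fintype.card V := by
  have : Nontrivial V := ⟨r, s, hrs⟩
  have card_compl_singleton (v : V) : #({v}ᶜ : Finset V) = Fintype.card V - 1 := by
    rw [card_compl, card_singleton]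
  have hne (v : V) : ({v}ᶜ : Finset V).Nonempty := by
    obtain ⟨w, hw⟩ := exists_ne v
    exact ⟨w, by simpa using hw⟩
  rw [isBalanced_compl_singleton.card_isEulerianTour hne
    (by simp [card_compl_singleton, hN]) (by simpa using hrs.symm),
    card_rootedForests_compl_singleton]
  simp only [card_compl_singleton, prod_const, card_univ, Nat.sub_sub]

end CountingEulerianTours

section UniversalCycles

open Finset

variable {n k N : ℕ}

theorem bijOn_iff_existsUnique_of_card_le {α β : Type*} {f : α → β} {S : Finset α} {T : Finset β}
    (h : #S ≤ #T) : Set.BijOn f S T ↔ ∀ b ∈ T, ∃! a, a ∈ S ∧ f a = b := by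
  classical
  refine ⟨fun hf b hb ↦ ?_, fun hf ↦ ?_⟩
  · obtain ⟨a, ha, rfl⟩ := hf.surjOn hb
    exact ⟨a, ⟨ha, rfl⟩, fun a' ha' ↦ hf.injOn ha'.1 ha ha'.2⟩
  · have hpre : {a ∈ S | f a ∈ T} = S := by
      refine eq_of_subset_of_card_le (filter_subset _ _) (h.trans ?_)
      refine card_le_card_of_surjOn f fun b hb ↦ ?_
      obtain ⟨a, ⟨ha, rfl⟩, -⟩ := hf b hb
      exact ⟨a, by simpa using ⟨ha, hb⟩, rfl⟩
    have hmaps : ∀ a ∈ S, f a ∈ T := filter_eq_self.1 hpre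
    exact ⟨hmaps, fun a ha a' ha' heq ↦ (hf _ (hmaps a ha)).unique ⟨ha, rfl⟩ ⟨ha', heq.symm⟩,
      fun b hb ↦ (hf b hb).exists⟩

theorem existsUnique_zmod_iff [NeZero N] {p : ZMod N → Prop} :
    (∃! i, p i) ↔ ∃! t : ℕ, t < N ∧ p t := by
  constructor
  · rintro ⟨i, hi, huniq⟩
    refine ⟨i.val, ⟨ZMod.val_lt i, by simpa using hi⟩, fun t ⟨ht, hpt⟩ ↦ ?_⟩
    rw [← huniq t hpt, ZMod.val_natCast_of_lt ht]
  · rintro ⟨t, ⟨-, hpt⟩, huniq⟩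
    refine ⟨t, hpt, fun i hi ↦ ?_⟩
    rw [← huniq i.val ⟨ZMod.val_lt i, by simpa using hi⟩, ZMod.natCast_zmod_val]

theorem isUniversalCycle_two_iff {c : ZMod N → Fin n} :
    IsUniversalCycle n 2 N c ↔ ∀ a b, a ≠ b → ∃! i, c i = a ∧ c (i + 1) = b := by
  simp only [IsUniversalCycle, Fin.forall_fin_two, Fin.val_zero, Fin.val_one, Nat.cast_zero,
    Nat.cast_one, add_zero]
  refine ⟨fun h a b hab ↦ ?_, fun h w hw ↦ h _ _ fun h01 ↦ by simpa using hw h01⟩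
  simpa using h ![a, b] (List.nodup_ofFn.1 (by simpa using hab))

theorem isUniversalCycle_two_iff_isEulerianTour [NeZero N] (hN : N ≤ n * (n - 1))
    {c : ZMod N → Fin n} :
    IsUniversalCycle n 2 N c ↔ IsEulerianTour (fun v ↦ {v}ᶜ) N (fun t ↦ c t) := by
  have harcs : {a : Fin n × Fin n | a.2 ∈ ({a.1}ᶜ : Finset (Fin n))} =
      ((univ : Finset (Fin n)).offDiag : Set (Fin n × Fin n)) := by
    ext a
    simp [eq_comm]
  have hcard : #(range N) ≤ #(univ : Finset (Fin n)).offDiag := by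
    simpa [offDiag_card, Nat.mul_sub_one] using hN
  rw [IsEulerianTour, harcs, ← coe_range, bijOn_iff_existsUnique_of_card_le hcard,
    isUniversalCycle_two_iff]
  simp only [existsUnique_zmod_iff, Prod.forall, mem_offDiag, mem_univ, true_and, mem_range,
    Prod.mk.injEq, Nat.cast_add, Nat.cast_one, CharP.cast_eq_zero, Nat.cast_zero]

theorem IsUniversalCycle.rotate {c : ZMod N → Fin n} (hc : IsUniversalCycle n k N c)
    (t : ZMod N) : IsUniversalCycle n k N fun i ↦ c (i + t) := by
  intro w hw
  obtain ⟨i, hi, huniq⟩ := hc w hw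
  refine ⟨i - t, fun j ↦ ?_, fun i' hi' ↦ eq_sub_of_add_eq (huniq _ fun j ↦ ?_)⟩
  · simpa [add_right_comm _ _ t] using hi j
  · simpa [add_right_comm _ _ t] using hi' j

theorem rotEquiv_equivalence : Equivalence (RotEquiv (n := n) (k := k) (N := N)) where
  refl _ := ⟨0, fun i ↦ by rw [add_zero]⟩
  symm := fun ⟨t, h⟩ ↦ ⟨-t, fun i ↦ by rw [h, neg_add_cancel_right]⟩
  trans := fun ⟨t, h⟩ ⟨t', h'⟩ ↦ ⟨t' + t, fun i ↦ by rw [h', h, add_assoc]⟩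

/- Each rotation class has exactly one member starting with the word `w`, since `w` occurs exactly
once. -/
theorem card_quot_rotEquiv {w : Fin k → Fin n} (hw : Function.Injective w) :
    Nat.card (Quot (RotEquiv (n := n) (k := k) (N := N))) =
      Nat.card {c : ZMod N → Fin n // IsUniversalCycle n k N c ∧ ∀ j : Fin k, c (j : ℕ) = w j} := by
  symm
  refine Nat.card_eq_of_bijective (fun c ↦ Quot.mk _ ⟨c.1, c.2.1⟩) ⟨?_, fun z ↦ ?_⟩
  · rintro ⟨c, hc, hcw⟩ ⟨c', hc', hcw'⟩ heq
    obtain ⟨t, ht⟩ := rotEquiv_equivalence.quot_mk_eq_iff _ _ |>.1 heq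
    have ht0 : t = 0 := (hc w hw).unique
      (fun j ↦ by rw [add_comm]; exact (ht _).symm.trans (hcw' j)) fun j ↦ by rw [zero_add, hcw]
    refine Subtype.ext (funext fun i ↦ ?_)
    simpa [ht0] using (ht i).symm
  · obtain ⟨⟨c, hc⟩, rfl⟩ := Quot.exists_rep z
    obtain ⟨t, ht, -⟩ := hc w hw
    refine ⟨⟨fun i ↦ c (i + t), hc.rotate t, fun j ↦ by simpa [add_comm] using ht j⟩, ?_⟩
    exact (Quot.sound ⟨t, fun i ↦ rfl⟩).symm

end UniversalCycles

theorem num_ucycles_k2 (n : ℕ) (hn : 3 ≤ n) :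
    Nat.card (Quot (RotEquiv (n := n) (k := 2) (N := n * (n - 1)))) =
      n ^ (n - 2) * (Nat.factorial (n - 2)) ^ n := by
  have : NeZero (n * (n - 1)) := ⟨Nat.mul_ne_zero (by omega) (by omega)⟩
  let r : Fin n := ⟨0, by omega⟩
  let s : Fin n := ⟨1, by omega⟩
  have hrs : r ≠ s := by simp [r, s]
  have hw : Function.Injective ![r, s] := List.nodup_ofFn.1 (by simpa using hrs)
  rw [card_quot_rotEquiv hw]
  simp only [isUniversalCycle_two_iff_isEulerianTour le_rfl, Fin.forall_fin_two, Fin.val_zero,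
    Fin.val_one, Nat.cast_zero, Nat.cast_one, Matrix.cons_val_zero, Matrix.cons_val_one]
  simpa using card_isEulerianTour_compl_singleton (N := n * (n - 1)) (by simp) hrs
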